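/- arXiv:2409.08553 — 2 statements merged into one kernel-verified Lean document; each statement's English description precedes it below -/
import Mathlib

section
/- For each sign l ∈ {1, −1} there exists a surjective ℝ-algebra homomorphism γ_l : Cl(4,3) → Mat₈(ℝ) such that γ_l(ν) = l • 1, i.e. Cl(4,3) admits exactly two inequivalent irreducible real Clifford modules of dimension 8, distinguished by the value they take on the volume element ν. -/
/- Signature (4,3) quadratic form on ℝ⁷:
   Q x = x₀² + x₁² + x₂² + x₃² − x₄² − x₅² − x₆². -/
noncomputable def sig43 : QuadraticForm ℝ (Fin 7 → ℝ) :=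
  QuadraticMap.weightedSumSquares ℝ ![(1 : ℝ), 1, 1, 1, -1, -1, -1]

/- Standard basis of ℝ⁷. -/
noncomputable def stdBasis (i : Fin 7) : Fin 7 → ℝ := Pi.single i 1

/- The volume element ν = ι(e₀) ⋯ ι(e₆) of Cl(4,3). -/
noncomputable def vol : CliffordAlgebra sig43 :=
  CliffordAlgebra.ι sig43 (stdBasis 0) * CliffordAlgebra.ι sig43 (stdBasis 1) *
  CliffordAlgebra.ι sig43 (stdBasis 2) * CliffordAlgebra.ι sig43 (stdBasis 3) *
  CliffordAlgebra.ι sig43 (stdBasis 4) * CliffordAlgebra.ι sig43 (stdBasis 5) *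
  CliffordAlgebra.ι sig43 (stdBasis 6)

/-! A hyperbolic plane doubles matrices: if `f` is a Clifford map for `Q` into an algebra `A`, then
`(v, s, t) ↦ !![f v, s; t, -f v]` is one for `Q v + s * t` into the `2 × 2` matrices over `A`, and
its image generates them when that of `f` generates `A`. As the form of signature `(4, 3)` is the
orthogonal sum of a square and three hyperbolic planes, this maps `Cl(4,3)` onto the real `8 × 8`
matrices. The volume element is central and squares to `1`, so its image is a scalar matrix of
square `1`, that is `±1`; and the grade involution negates it, so both signs occur. -/

open CliffordAlgebra

section HyperbolicPlane

theorem subalgebra_matrix_fin_two_eq_top {R A : Type*} [CommSemiring R] [Semiring A]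
    [Algebra R A] {S : Subalgebra R (Matrix (Fin 2) (Fin 2) A)}
    (h_scalar : ∀ a, Matrix.scalar (Fin 2) a ∈ S) (h_upper : !![0, 1; 0, 0] ∈ S)
    (h_lower : !![0, 0; 1, 0] ∈ S) : S = ⊤ := by
  refine eq_top_iff.2 fun M _ => ?_
  have h_decomp : M = Matrix.scalar (Fin 2) (M 0 0) * (!![0, 1; 0, 0] * !![0, 0; 1, 0]) +
      Matrix.scalar (Fin 2) (M 0 1) * !![0, 1; 0, 0] +
      Matrix.scalar (Fin 2) (M 1 0) * !![0, 0; 1, 0] +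
      Matrix.scalar (Fin 2) (M 1 1) * (!![0, 0; 1, 0] * !![0, 1; 0, 0]) := by
    ext i j
    fin_cases i <;> fin_cases j <;> simp
  rw [h_decomp]
  exact add_mem (add_mem (add_mem (mul_mem (h_scalar _) (mul_mem h_upper h_lower))
    (mul_mem (h_scalar _) h_upper)) (mul_mem (h_scalar _) h_lower))
    (mul_mem (h_scalar _) (mul_mem h_lower h_upper))

variable {R : Type*} [CommRing R]

variable (R) in
/-- The hyperbolic plane over `R`, in isotropic coordinates: the form `(s, t) ↦ s * t` on
`R × R`. -/
def hyperbolicPlane : QuadraticForm R (R × R) :=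
  QuadraticMap.linMulLin (LinearMap.fst R R R) (LinearMap.snd R R R)

@[simp]
theorem hyperbolicPlane_apply (p : R × R) : hyperbolicPlane R p = p.1 * p.2 := rfl

variable {M : Type*} [AddCommGroup M] [Module R M] {Q : QuadraticForm R M}
  {A : Type*} [Ring A] [Algebra R A]

/-- The linear map `(v, s, t) ↦ !![f v, s; t, -f v]`, which is a Clifford map for the orthogonal
sum of `Q` and a hyperbolic plane when `f` is one for `Q`. -/
def hyperbolicMatrix (f : M →ₗ[R] A) : M × R × R →ₗ[R] Matrix (Fin 2) (Fin 2) A where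
  toFun x := !![f x.1, algebraMap R A x.2.1; algebraMap R A x.2.2, -f x.1]
  map_add' x y := by simp [add_comm]
  map_smul' c x := by simp [Algebra.smul_def c (_ : A), Matrix.smul_of]

theorem hyperbolicMatrix_apply (f : M →ₗ[R] A) (v : M) (s t : R) :
    hyperbolicMatrix f (v, s, t) = !![f v, algebraMap R A s; algebraMap R A t, -f v] := rfl

theorem hyperbolicMatrix_mul_self {f : M →ₗ[R] A} (hf : ∀ v, f v * f v = algebraMap R A (Q v))
    (x : M × R × R) : hyperbolicMatrix f x * hyperbolicMatrix f x =
      algebraMap R _ (Q.prod (hyperbolicPlane R) x) := by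
  obtain ⟨v, s, t⟩ := x
  have h_upper : f v * algebraMap R A s + algebraMap R A s * -f v = 0 := by
    rw [← Algebra.commutes s, mul_neg, add_neg_cancel]
  have h_lower : algebraMap R A t * f v + -f v * algebraMap R A t = 0 := by
    rw [Algebra.commutes t, neg_mul, add_neg_cancel]
  rw [hyperbolicMatrix_apply, Matrix.mul_fin_two, h_upper, h_lower, neg_mul_neg, hf, ← map_mul,
    ← map_mul, ← map_add, ← map_add, mul_comm t s, add_comm (s * t)]
  ext i j
  fin_cases i <;> fin_cases j <;> simp [Matrix.algebraMap_matrix_apply]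

/-- The extension of a Clifford module by a hyperbolic plane: a representation of `Cl(Q)` in `A`
induces one of `Cl(Q ⊥ H)` in the `2 × 2` matrices over `A`. -/
def hyperbolicExtension (γ : CliffordAlgebra Q →ₐ[R] A) :
    CliffordAlgebra (Q.prod (hyperbolicPlane R)) →ₐ[R] Matrix (Fin 2) (Fin 2) A :=
  lift _ ⟨hyperbolicMatrix (γ.toLinearMap ∘ₗ ι Q),
    hyperbolicMatrix_mul_self fun v => comp_ι_sq_scalar γ v⟩

theorem hyperbolicExtension_ι (γ : CliffordAlgebra Q →ₐ[R] A) (v : M) (s t : R) :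
    hyperbolicExtension γ (ι _ (v, s, t)) =
      !![γ (ι Q v), algebraMap R A s; algebraMap R A t, -γ (ι Q v)] :=
  lift_ι_apply _ _ _

theorem hyperbolicExtension_surjective {γ : CliffordAlgebra Q →ₐ[R] A}
    (hγ : Function.Surjective γ) : Function.Surjective (hyperbolicExtension γ) := by
  set S := (hyperbolicExtension γ).range
  have h_mem (v : M) (s t : R) :
      !![γ (ι Q v), algebraMap R A s; algebraMap R A t, -γ (ι Q v)] ∈ S :=
    ⟨_, hyperbolicExtension_ι γ v s t⟩
  have h_upper : !![0, 1; 0, 0] ∈ S := by simpa using h_mem 0 1 0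
  have h_lower : !![0, 0; 1, 0] ∈ S := by simpa using h_mem 0 0 1
  have h_generator (v : M) : Matrix.scalar (Fin 2) (γ (ι Q v)) ∈ S := by
    have h_sign : !![0, 1; 0, 0] * !![0, 0; 1, 0] - !![0, 0; 1, 0] * !![0, 1; 0, 0] ∈ S :=
      sub_mem (mul_mem h_upper h_lower) (mul_mem h_lower h_upper)
    convert mul_mem (h_mem v 0 0) h_sign using 1
    ext i j
    fin_cases i <;> fin_cases j <;> simp
  have h_adjoin : Algebra.adjoin R (Set.range (ι Q)) ≤
      S.comap ((Matrix.scalarAlgHom (Fin 2) R).comp γ) :=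
    Algebra.adjoin_le (Set.range_subset_iff.2 h_generator)
  have h_scalar (a : A) : Matrix.scalar (Fin 2) a ∈ S := by
    obtain ⟨x, rfl⟩ := hγ a
    exact h_adjoin (adjoin_range_ι (Q := Q) ▸ Algebra.mem_top)
  exact (AlgHom.range_eq_top _).1 (subalgebra_matrix_fin_two_eq_top h_scalar h_upper h_lower)

theorem exists_surjective_prod_hyperbolicPlane {n : ℕ}
    (h : ∃ γ : CliffordAlgebra Q →ₐ[R] Matrix (Fin n) (Fin n) R, Function.Surjective γ) :
    ∃ γ : CliffordAlgebra (Q.prod (hyperbolicPlane R)) →ₐ[R]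
      Matrix (Fin (2 * n)) (Fin (2 * n)) R, Function.Surjective γ := by
  obtain ⟨γ, hγ⟩ := h
  let e := (Matrix.compAlgEquiv (Fin 2) (Fin n) R R).trans
    (Matrix.reindexAlgEquiv R R finProdFinEquiv)
  exact ⟨e.toAlgHom.comp (hyperbolicExtension γ),
    e.surjective.comp (hyperbolicExtension_surjective hγ)⟩

variable (R) in
theorem exists_surjective_sq : ∃ γ : CliffordAlgebra (QuadraticMap.sq : QuadraticForm R R) →ₐ[R]
    Matrix (Fin 1) (Fin 1) R, Function.Surjective γ := by
  refine ⟨lift _ ⟨Algebra.linearMap R _, fun r => (map_mul (algebraMap R _) r r).symm⟩,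
    fun B => ⟨algebraMap R _ (B 0 0), ?_⟩⟩
  ext i j
  simp [Subsingleton.elim i 0, Subsingleton.elim j 0, Matrix.algebraMap_matrix_apply]

end HyperbolicPlane

section OrthogonalProduct

variable {R M : Type*} [CommRing R] [AddCommGroup M] [Module R M] {Q : QuadraticForm R M}
  {l : List M}

theorem prod_map_ι_mul_ι_of_isOrtho {x : M} (h : ∀ y ∈ l, Q.IsOrtho x y) :
    (l.map (ι Q)).prod * ι Q x = (-1 : R) ^ l.length • (ι Q x * (l.map (ι Q)).prod) := by
  induction l with
  | nil => simp
  | cons y l ih =>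
    obtain ⟨hy, hl⟩ := List.forall_mem_cons.1 h
    rw [List.map_cons, List.prod_cons, mul_assoc, ih hl, mul_smul_comm, ← mul_assoc,
      ι_mul_ι_comm_of_isOrtho hy.symm, neg_mul, mul_assoc, List.length_cons, pow_succ, mul_neg_one,
      neg_smul, smul_neg]

theorem prod_map_ι_mul_ι_of_mem {x : M} (h : l.Pairwise Q.IsOrtho) (hx : x ∈ l) :
    (l.map (ι Q)).prod * ι Q x = (-1 : R) ^ (l.length + 1) • (ι Q x * (l.map (ι Q)).prod) := by
  induction l with
  | nil => simp at hx
  | cons y l ih =>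
    obtain ⟨hy, hl⟩ := List.pairwise_cons.1 h
    rw [List.map_cons, List.prod_cons, mul_assoc, List.length_cons]
    rcases List.mem_cons.1 hx with rfl | hxl
    · rw [prod_map_ι_mul_ι_of_isOrtho hy, mul_smul_comm, pow_add _ _ 2, neg_one_sq, mul_one]
    · rw [ih hl hxl, mul_smul_comm, ← mul_assoc, ι_mul_ι_comm_of_isOrtho (hy x hxl), neg_mul,
        mul_assoc, pow_succ _ (l.length + 1), mul_neg_one, neg_smul, smul_neg]

theorem prod_map_ι_mul_self (h : l.Pairwise Q.IsOrtho) :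
    (l.map (ι Q)).prod * (l.map (ι Q)).prod =
      algebraMap R _ ((-1) ^ l.length.choose 2 * (l.map Q).prod) := by
  induction l with
  | nil => simp
  | cons x l ih =>
    obtain ⟨hx, hl⟩ := List.pairwise_cons.1 h
    set P := (l.map (ι Q)).prod
    calc ((x :: l).map (ι Q)).prod * ((x :: l).map (ι Q)).prod
        = ι Q x * (P * ι Q x) * P := by simp only [List.map_cons, List.prod_cons, mul_assoc, P]
      _ = (-1 : R) ^ l.length • (ι Q x * ι Q x * (P * P)) := by
        rw [prod_map_ι_mul_ι_of_isOrtho hx, mul_smul_comm, smul_mul_assoc]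
        simp only [mul_assoc, P]
      _ = _ := by
        rw [ih hl, ι_sq_scalar, Algebra.smul_def, ← map_mul, ← map_mul, List.length_cons,
          Nat.choose_succ_succ', Nat.choose_one_right, pow_add, List.map_cons, List.prod_cons]
        ring_nf

theorem prod_map_ι_mem_center (h : l.Pairwise Q.IsOrtho) (h_odd : Odd l.length)
    (h_span : Submodule.span R {x | x ∈ l} = ⊤) :
    (l.map (ι Q)).prod ∈ Subalgebra.center R (CliffordAlgebra Q) := by
  set P := (l.map (ι Q)).prod
  have h_vector (x : M) : P * ι Q x = ι Q x * P := by
    have h_eqOn : Set.EqOn (LinearMap.mulLeft R P ∘ₗ ι Q) (LinearMap.mulRight R P ∘ₗ ι Q)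
        {x | x ∈ l} := fun x hx => by
      simpa [h_odd.add_one.neg_one_pow] using prod_map_ι_mul_ι_of_mem h hx
    exact LinearMap.congr_fun (LinearMap.ext_on h_span h_eqOn) x
  have h_adjoin : Algebra.adjoin R (Set.range (ι Q)) ≤ Subalgebra.centralizer R {P} :=
    Algebra.adjoin_le <| Set.range_subset_iff.2 fun x => by
      rintro _ rfl
      exact h_vector x
  refine Subalgebra.mem_center_iff.2 fun a => ?_
  have ha : a ∈ Subalgebra.centralizer R {P} :=
    h_adjoin (adjoin_range_ι (Q := Q) ▸ Algebra.mem_top)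
  exact (Subalgebra.mem_centralizer_iff R |>.1 ha P rfl).symm

theorem map_eq_one_or_neg_one_of_mem_center [NoZeroDivisors R] {A B : Type*} [Ring A] [Algebra R A]
    [Ring B] [Algebra R B] [FaithfulSMul R B] [Algebra.IsCentral R B] {f : A →ₐ[R] B}
    (hf : Function.Surjective f) {a : A} (ha : a ∈ Subalgebra.center R A) (h_sq : a * a = 1) :
    f a = 1 ∨ f a = -1 := by
  have h_center : f a ∈ Subalgebra.center R B :=
    Subalgebra.mem_center_iff.2 <| hf.forall.2 fun b => by
      rw [← map_mul, ← map_mul, Subalgebra.mem_center_iff.1 ha]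
  rw [Algebra.IsCentral.center_eq_bot] at h_center
  obtain ⟨c, hc : algebraMap R B c = f a⟩ := Algebra.mem_bot.1 h_center
  have hc_sq : c * c = 1 := FaithfulSMul.algebraMap_injective R B <| by
    rw [map_mul, hc, ← map_mul, h_sq, map_one, map_one]
  rcases mul_self_eq_one_iff.1 hc_sq with rfl | rfl
  · exact .inl (by rw [← hc, map_one])
  · exact .inr (by rw [← hc, map_neg, map_one])

theorem exists_surjective_prod_map_ι_eq [NoZeroDivisors R] {B : Type*} [Ring B] [Algebra R B]
    [FaithfulSMul R B] [Algebra.IsCentral R B]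
    (h : l.Pairwise Q.IsOrtho) (h_odd : Odd l.length) (h_span : Submodule.span R {x | x ∈ l} = ⊤)
    (h_disc : (-1) ^ l.length.choose 2 * (l.map Q).prod = 1)
    {γ : CliffordAlgebra Q →ₐ[R] B} (hγ : Function.Surjective γ) {ε : R} (hε : ε = 1 ∨ ε = -1) :
    ∃ γ' : CliffordAlgebra Q →ₐ[R] B,
      Function.Surjective γ' ∧ γ' (l.map (ι Q)).prod = ε • 1 := by
  have h_value : γ (l.map (ι Q)).prod = 1 ∨ γ (l.map (ι Q)).prod = -1 :=
    map_eq_one_or_neg_one_of_mem_center hγ (prod_map_ι_mem_center h h_odd h_span)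
      (by rw [prod_map_ι_mul_self h, h_disc, map_one])
  have h_up_to_sign : γ (l.map (ι Q)).prod = ε • 1 ∨ γ (l.map (ι Q)).prod = -(ε • 1) := by
    rcases hε with rfl | rfl
    · simpa only [one_smul] using h_value
    · simpa only [neg_smul, one_smul, neg_neg] using h_value.symm
  rcases h_up_to_sign with h_same | h_opposite
  · exact ⟨γ, hγ, h_same⟩
  · refine ⟨γ.comp involute, hγ.comp involute_involutive.surjective, ?_⟩
    rw [AlgHom.comp_apply, involute_prod_map_ι, h_odd.neg_one_pow, neg_one_smul, map_neg,
      h_opposite, neg_neg]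

end OrthogonalProduct

section Signature

theorem isOrtho_weightedSumSquares_single {R n : Type*} [CommRing R] [Fintype n] [DecidableEq n]
    (w : n → R) {i j : n} (hij : i ≠ j) (a b : R) :
    (QuadraticMap.weightedSumSquares R w).IsOrtho (Pi.single i a) (Pi.single j b) := by
  rw [QuadraticMap.isOrtho_def]
  simp only [QuadraticMap.weightedSumSquares_apply, ← Finset.sum_add_distrib]
  refine Finset.sum_congr rfl fun k _ => ?_
  rcases ne_or_eq k i with hk | rfl
  · simp [hk]
  · simp [hij]

/-- The isometry from the form of signature `(4, 3)` to the orthogonal sum of a square and three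
hyperbolic planes: the plane of `x ^ 2 - y ^ 2` has isotropic coordinates `(x + y, x - y)`. -/
noncomputable def sig43SplitIsometry : sig43 →qᵢ
    (((QuadraticMap.sq.prod (hyperbolicPlane ℝ)).prod (hyperbolicPlane ℝ)).prod
      (hyperbolicPlane ℝ)) where
  toFun x := (((x 3, x 0 + x 4, x 0 - x 4), x 1 + x 5, x 1 - x 5), x 2 + x 6, x 2 - x 6)
  map_add' x y := by ext <;> simp only [Pi.add_apply, Prod.mk_add_mk] <;> ring
  map_smul' c x := by
    ext <;> simp only [Pi.smul_apply, smul_eq_mul, Prod.smul_mk, RingHom.id_apply] <;> ring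
  map_app' x := by
    simp only [sig43, QuadraticMap.prod_apply, QuadraticMap.sq_apply, hyperbolicPlane_apply,
      QuadraticMap.weightedSumSquares_apply, Fin.sum_univ_seven, Matrix.cons_val, smul_eq_mul]
    ring

theorem sig43SplitIsometry_surjective : Function.Surjective sig43SplitIsometry := by
  rintro ⟨⟨⟨x, s₀, t₀⟩, s₁, t₁⟩, s₂, t₂⟩
  refine ⟨![(s₀ + t₀) / 2, (s₁ + t₁) / 2, (s₂ + t₂) / 2, x,
    (s₀ - t₀) / 2, (s₁ - t₁) / 2, (s₂ - t₂) / 2], ?_⟩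
  change (((_, _, _), _, _), _, _) = _
  ext <;> simp only [Matrix.cons_val] <;> ring

theorem exists_surjective_sig43 :
    ∃ γ : CliffordAlgebra sig43 →ₐ[ℝ] Matrix (Fin 8) (Fin 8) ℝ, Function.Surjective γ := by
  obtain ⟨γ, hγ⟩ := exists_surjective_prod_hyperbolicPlane <|
    exists_surjective_prod_hyperbolicPlane <| exists_surjective_prod_hyperbolicPlane <|
      exists_surjective_sq ℝ
  exact ⟨γ.comp (CliffordAlgebra.map sig43SplitIsometry),
    hγ.comp (map_surjective _ sig43SplitIsometry_surjective)⟩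

theorem sig43_stdBasis (i : Fin 7) : sig43 (stdBasis i) = ![(1 : ℝ), 1, 1, 1, -1, -1, -1] i := by
  simp [sig43, stdBasis, QuadraticMap.weightedSumSquares_apply, Pi.single_apply]

theorem isOrtho_stdBasis {i j : Fin 7} (hij : i ≠ j) : sig43.IsOrtho (stdBasis i) (stdBasis j) :=
  isOrtho_weightedSumSquares_single _ hij 1 1

theorem span_stdBasis : Submodule.span ℝ {x | x ∈ List.ofFn stdBasis} = ⊤ := by
  have h_basis : Set.range (Pi.basisFun ℝ (Fin 7)) = {x | x ∈ List.ofFn stdBasis} := by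
    ext x
    simp only [Set.mem_range, Pi.basisFun_apply, Set.mem_ofPred_eq, List.mem_ofFn, stdBasis]
  rw [← h_basis, Module.Basis.span_eq]

theorem vol_eq_prod_map_ι : vol = ((List.ofFn stdBasis).map (ι sig43)).prod := by
  simp [vol, mul_assoc, List.ofFn_succ]

end Signature

/-- for each sign l ∈ {1, −1} there is a surjective ℝ-algebra
homomorphism γ_l : Cl(4,3) → Mat₈(ℝ) with γ_l(ν) = l • 1, i.e. Cl(4,3) has two
irreducible real 8-dimensional Clifford modules distinguished by the value of ν. -/
theorem exists_irreducible_module_with_vol (l : ℝ) (hl : l = 1 ∨ l = -1) :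
    ∃ γ : CliffordAlgebra sig43 →ₐ[ℝ] Matrix (Fin 8) (Fin 8) ℝ,
      Function.Surjective γ ∧ γ vol = l • (1 : Matrix (Fin 8) (Fin 8) ℝ) := by
  obtain ⟨γ, hγ⟩ := exists_surjective_sig43
  have h_ortho : (List.ofFn stdBasis).Pairwise sig43.IsOrtho :=
    List.pairwise_ofFn.2 fun _ _ hij => isOrtho_stdBasis hij.ne
  have h_odd : Odd (List.ofFn stdBasis).length := by
    rw [List.length_ofFn]
    decide
  have h_disc : (-1) ^ (List.ofFn stdBasis).length.choose 2 *
      ((List.ofFn stdBasis).map sig43).prod = 1 := by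
    have h_sign : (-1 : ℝ) ^ Nat.choose 7 2 = -1 := Odd.neg_one_pow (by decide)
    simp [List.ofFn_succ, sig43_stdBasis, h_sign]
  rw [vol_eq_prod_map_ι]
  exact exists_surjective_prod_map_ι_eq h_ortho h_odd span_stdBasis h_disc hγ hl
end

section
/- Let 𝔫 := { S(B) + N(v) : B ∈ Mat₃(ℝ) with Bᵀ = −B, v ∈ ℝ³ } ⊆ Mat₇(ℝ). Then 𝔫 is a Lie subalgebra under the matrix commutator, its derived subalgebra ⁅𝔫, 𝔫⁆ equals { S(B) : Bᵀ = −B } and has dimension 3, and ⁅⁅𝔫, 𝔫⁆, 𝔫⁆ = 0; hence 𝔫 is a 6-dimensional two-step nilpotent Lie algebra with three-dimensional derived subalgebra (the algebra Λ²ℝ³ ⊕ ℝ³). -/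
open Matrix

/- The Gram matrix H = [[0, I₃, 0], [I₃, 0, 0], [0, 0, 1]] of the standard
signature-(4,3) symmetric bilinear form in an isotropic basis. -/
noncomputable def H : Matrix (Fin 7) (Fin 7) ℝ :=
  !![0,0,0,1,0,0,0;
     0,0,0,0,1,0,0;
     0,0,0,0,0,1,0;
     1,0,0,0,0,0,0;
     0,1,0,0,0,0,0;
     0,0,1,0,0,0,0;
     0,0,0,0,0,0,1]

/- 7×7 matrix in 3+3+1 block form: rows [[A, B, v], [C, D, u], [xᵀ, yᵀ, r]]. -/
noncomputable def blk (A B C D : Matrix (Fin 3) (Fin 3) ℝ) (v u x y : Fin 3 → ℝ)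
    (r : ℝ) : Matrix (Fin 7) (Fin 7) ℝ :=
  Matrix.of fun i j =>
    if hi : (i : ℕ) < 3 then
      if hj : (j : ℕ) < 3 then A ⟨i, hi⟩ ⟨j, hj⟩
      else if hj' : (j : ℕ) < 6 then B ⟨i, hi⟩ ⟨(j : ℕ) - 3, by omega⟩
      else v ⟨i, hi⟩
    else if hi' : (i : ℕ) < 6 then
      if hj : (j : ℕ) < 3 then C ⟨(i : ℕ) - 3, by omega⟩ ⟨j, hj⟩
      else if hj' : (j : ℕ) < 6 then D ⟨(i : ℕ) - 3, by omega⟩ ⟨(j : ℕ) - 3, by omega⟩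
      else u ⟨(i : ℕ) - 3, by omega⟩
    else
      if hj : (j : ℕ) < 3 then x ⟨j, hj⟩
      else if hj' : (j : ℕ) < 6 then y ⟨(j : ℕ) - 3, by omega⟩
      else r

/- T(A) = [[A, 0, 0], [0, −Aᵀ, 0], [0, 0, 0]]. -/
noncomputable def T (A : Matrix (Fin 3) (Fin 3) ℝ) : Matrix (Fin 7) (Fin 7) ℝ :=
  blk A 0 0 (-Aᵀ) 0 0 0 0 0

/- S(B) = [[0, B, 0], [0, 0, 0], [0, 0, 0]]. -/
noncomputable def S (B : Matrix (Fin 3) (Fin 3) ℝ) : Matrix (Fin 7) (Fin 7) ℝ :=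
  blk 0 B 0 0 0 0 0 0 0

/- N(v) = [[0, 0, v], [0, 0, 0], [0, −vᵀ, 0]]. -/
noncomputable def N (v : Fin 3 → ℝ) : Matrix (Fin 7) (Fin 7) ℝ :=
  blk 0 0 0 0 v 0 0 (-v) 0

/- 𝔫 = { S(B) + N(v) : Bᵀ = −B, v ∈ ℝ³ }. -/
noncomputable def nilp : Set (Matrix (Fin 7) (Fin 7) ℝ) :=
  {M | ∃ (B : Matrix (Fin 3) (Fin 3) ℝ) (v : Fin 3 → ℝ), Bᵀ = -B ∧ M = S B + N v}

/- The set { S(B) : Bᵀ = −B }. -/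
noncomputable def derivedNilp : Set (Matrix (Fin 7) (Fin 7) ℝ) :=
  {M | ∃ B : Matrix (Fin 3) (Fin 3) ℝ, Bᵀ = -B ∧ M = S B}

/-!
The parametrization `(B, v) ↦ S B + N v` carries the bracket to
`⁅(B, v), (C, w)⁆ = (w ∧ v, 0)`, where `w ∧ v = w vᵀ - v wᵀ`. So a bracket lands in the
skew-symmetric part, and it vanishes when `v = 0`. Conversely every skew-symmetric matrix is a
combination of matrices `w ∧ v`: if `Aᵀ = -A` then `2 A = A - Aᵀ = ∑ j, A eⱼ ∧ eⱼ`.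
-/

open LieAlgebra.Orthogonal (so mem_so)
open Module (finrank)

section SkewSymmetric

variable {n R : Type*} [DecidableEq n] [Fintype n] [CommRing R]

lemma apply_swap_of_mem_so {A : Matrix n n R} (hA : A ∈ so n R) (i j : n) :
    A j i = -A i j :=
  congr_fun₂ ((mem_so n R A).1 hA) i j

lemma apply_self_of_mem_so [Invertible (2 : R)] {A : Matrix n n R} (hA : A ∈ so n R) (i : n) :
    A i i = 0 := by
  have two_mul_eq_zero : 2 * A i i = 0 := by
    rw [two_mul, add_eq_zero_iff_eq_neg]
    exact apply_swap_of_mem_so hA i i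
  exact (isUnit_of_invertible (2 : R)).mul_right_eq_zero.1 two_mul_eq_zero

/-- The wedge product `v ∧ w` of two vectors, as the skew-symmetric matrix `v wᵀ - w vᵀ`;
the brackets of `𝔫` have this form. -/
def wedge (v w : n → R) : so n R :=
  ⟨vecMulVec v w - vecMulVec w v, by simp [transpose_vecMulVec]⟩

lemma coe_wedge (v w : n → R) : (wedge v w : Matrix n n R) = vecMulVec v w - vecMulVec w v :=
  rfl

lemma wedge_zero_right (v : n → R) : wedge v 0 = 0 :=
  Subtype.ext <| by simp [coe_wedge]

lemma sum_wedge_col_single (A : Matrix n n R) :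
    ∑ j, (wedge (A.col j) (Pi.single j 1) : Matrix n n R) = A - Aᵀ := by
  ext i k
  simp [coe_wedge, Matrix.sum_apply, vecMulVec_apply, Pi.single_apply]

theorem span_range_wedge [Invertible (2 : R)] :
    Submodule.span R (Set.range fun p : (n → R) × (n → R) ↦ wedge p.1 p.2) = ⊤ := by
  refine eq_top_iff.2 fun A _ ↦ ?_
  have half_sum_wedge : A = ⅟(2 : R) • ∑ j, wedge (A.1.col j) (Pi.single j 1) := by
    have hA : A.1ᵀ = -A.1 := (mem_so n R _).1 A.2
    apply Subtype.ext
    simp [sum_wedge_col_single, hA, ← two_smul R A.1, smul_smul]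
  rw [half_sum_wedge]
  exact Submodule.smul_mem _ _ <| Submodule.sum_mem _ fun j _ ↦
    Submodule.subset_span ⟨(A.1.col j, Pi.single j 1), rfl⟩

end SkewSymmetric

section SkewSymmetricCoordinates

variable (n R : Type*) [LinearOrder n] [Fintype n] [CommRing R]

/-- The coordinates of a skew-symmetric matrix, namely its entries strictly above the diagonal;
their number is the dimension of `so n R`. -/
def soEquivStrictUpper [Invertible (2 : R)] :
    so n R ≃ₗ[R] ({p : n × n // p.1 < p.2} → R) where
  toFun A p := A.1 p.1.1 p.1.2
  map_add' _ _ := rfl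
  map_smul' _ _ := rfl
  invFun f :=
    ⟨of fun i j ↦ if h : i < j then f ⟨(i, j), h⟩ else if h : j < i then -f ⟨(j, i), h⟩ else 0, by
      rw [mem_so]
      ext i j
      rcases lt_trichotomy i j with h | rfl | h
      · simp [h, h.not_gt]
      · simp
      · simp [h, h.not_gt]⟩
  left_inv A := by
    ext i j
    rcases lt_trichotomy i j with h | rfl | h
    · simp [h]
    · simp [apply_self_of_mem_so A.2]
    · simp [h, h.not_gt, apply_swap_of_mem_so A.2 j i]
  right_inv f := by
    ext p
    simp [p.2]

theorem finrank_so [Nontrivial R] [Invertible (2 : R)] :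
    finrank R (so n R) = (Fintype.card n).choose 2 := by
  rw [(soEquivStrictUpper n R).finrank_eq, Module.finrank_fintype_fun_eq_card, Fintype.card_subtype,
    Fintype.card_product_filter_lt]

end SkewSymmetricCoordinates

section Blocks

variable (A B C D A' B' C' D' : Matrix (Fin 3) (Fin 3) ℝ) (v u x y v' u' x' y' : Fin 3 → ℝ)
  (r r' : ℝ)

lemma blk_add_blk :
    blk A B C D v u x y r + blk A' B' C' D' v' u' x' y' r' =
      blk (A + A') (B + B') (C + C') (D + D') (v + v') (u + u') (x + x') (y + y') (r + r') := by
  ext i j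
  simp only [blk, Matrix.add_apply, of_apply, Pi.add_apply]
  split_ifs <;> rfl

lemma smul_blk (c : ℝ) :
    c • blk A B C D v u x y r =
      blk (c • A) (c • B) (c • C) (c • D) (c • v) (c • u) (c • x) (c • y) (c • r) := by
  ext i j
  simp only [blk, Matrix.smul_apply, of_apply, Pi.smul_apply]
  split_ifs <;> rfl

lemma blk_mul_blk :
    blk A B C D v u x y r * blk A' B' C' D' v' u' x' y' r' =
      blk (A * A' + B * C' + vecMulVec v x') (A * B' + B * D' + vecMulVec v y')
        (C * A' + D * C' + vecMulVec u x') (C * B' + D * D' + vecMulVec u y')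
        (A *ᵥ v' + B *ᵥ u' + r' • v) (C *ᵥ v' + D *ᵥ u' + r' • u)
        (x ᵥ* A' + y ᵥ* C' + r • x') (x ᵥ* B' + y ᵥ* D' + r • y')
        (x ⬝ᵥ v' + y ⬝ᵥ u' + r * r') := by
  ext i j
  have add_three_lt_six (k : Fin 3) : (k : ℕ) + 3 < 6 := by lia
  rw [mul_apply, Fin.sum_univ_add (a := 3 + 3) (b := 1), Fin.sum_univ_add (a := 3) (b := 3)]
  simp only [blk, of_apply]
  split_ifs <;>
    simp [add_three_lt_six, mul_apply, vecMulVec_apply, mulVec, vecMul, dotProduct, mul_comm]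

end Blocks

lemma S_add_N (B : Matrix (Fin 3) (Fin 3) ℝ) (v : Fin 3 → ℝ) :
    S B + N v = blk 0 B 0 0 v 0 0 (-v) 0 := by
  simp [S, N, blk_add_blk]

/-- The linear parametrization `(B, v) ↦ S(B) + N(v)` of `𝔫` by `Λ²ℝ³ ⊕ ℝ³`, with `Λ²ℝ³` encoded
as the skew-symmetric matrices. -/
noncomputable def nilpParam :
    so (Fin 3) ℝ × (Fin 3 → ℝ) →ₗ[ℝ] Matrix (Fin 7) (Fin 7) ℝ where
  toFun p := S p.1 + N p.2
  map_add' p q := by simp [S_add_N, blk_add_blk, -neg_add_rev, neg_add]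
  map_smul' c p := by simp [S_add_N, smul_blk]

lemma nilpParam_apply (p : so (Fin 3) ℝ × (Fin 3 → ℝ)) :
    nilpParam p = blk 0 p.1 0 0 p.2 0 0 (-p.2) 0 :=
  S_add_N p.1 p.2

lemma nilpParam_inl (B : so (Fin 3) ℝ) : nilpParam (B, 0) = S B := by
  simp [nilpParam_apply, S]

lemma nilpParam_injective : Function.Injective nilpParam := by
  intro p q h
  simp only [nilpParam_apply] at h
  refine Prod.ext (Subtype.ext ?_) ?_
  · ext i j
    have add_three_lt_six : (j : ℕ) + 3 < 6 := by lia
    simpa [blk, add_three_lt_six] using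
      congr_fun₂ h (Fin.castAdd 4 i) (Fin.castAdd 1 (Fin.natAdd 3 j))
  · ext i
    simpa [blk] using congr_fun₂ h (Fin.castAdd 4 i) (Fin.last 6)

lemma lie_nilpParam (p q : so (Fin 3) ℝ × (Fin 3 → ℝ)) :
    ⁅nilpParam p, nilpParam q⁆ = nilpParam (wedge q.2 p.2, 0) := by
  have mul_eq (p q : so (Fin 3) ℝ × (Fin 3 → ℝ)) :
      nilpParam p * nilpParam q = blk 0 (-vecMulVec p.2 q.2) 0 0 0 0 0 0 0 := by
    simp [nilpParam_apply, blk_mul_blk]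
  rw [Ring.lie_def, sub_eq_iff_eq_add, mul_eq, mul_eq, nilpParam_apply, blk_add_blk, coe_wedge]
  simp only [add_zero, neg_zero]
  congr 1
  abel

lemma nilp_eq_range : nilp = LinearMap.range nilpParam := by
  ext M
  constructor
  · rintro ⟨B, v, hB, rfl⟩
    exact ⟨(⟨B, (mem_so _ _ B).2 hB⟩, v), rfl⟩
  · rintro ⟨⟨B, v⟩, rfl⟩
    exact ⟨B, v, (mem_so _ _ _).1 B.2, rfl⟩

lemma derivedNilp_eq_range :
    derivedNilp = LinearMap.range (nilpParam ∘ₗ LinearMap.inl ℝ _ _) := by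
  ext M
  constructor
  · rintro ⟨B, hB, rfl⟩
    exact ⟨⟨B, (mem_so _ _ B).2 hB⟩, nilpParam_inl _⟩
  · rintro ⟨B, rfl⟩
    exact ⟨B, (mem_so _ _ _).1 B.2, nilpParam_inl B⟩

lemma lie_mem_nilp {M₁ M₂ : Matrix (Fin 7) (Fin 7) ℝ} (h₁ : M₁ ∈ nilp) (h₂ : M₂ ∈ nilp) :
    ⁅M₁, M₂⁆ ∈ nilp := by
  rw [nilp_eq_range] at *
  obtain ⟨p, rfl⟩ := h₁
  obtain ⟨q, rfl⟩ := h₂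
  exact ⟨_, (lie_nilpParam p q).symm⟩

lemma lie_eq_zero_of_mem_derivedNilp {M₁ M₂ : Matrix (Fin 7) (Fin 7) ℝ} (h₁ : M₁ ∈ derivedNilp)
    (h₂ : M₂ ∈ nilp) : ⁅M₁, M₂⁆ = 0 := by
  rw [derivedNilp_eq_range] at h₁
  rw [nilp_eq_range] at h₂
  obtain ⟨B, rfl⟩ := h₁
  obtain ⟨q, rfl⟩ := h₂
  simp [lie_nilpParam, wedge_zero_right, ← Prod.zero_eq_mk]

lemma setOf_lie_nilp :
    {m | ∃ M₁ ∈ nilp, ∃ M₂ ∈ nilp, m = ⁅M₁, M₂⁆} =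
      (nilpParam ∘ₗ LinearMap.inl ℝ _ _) ''
        Set.range fun p : (Fin 3 → ℝ) × (Fin 3 → ℝ) ↦ wedge p.1 p.2 := by
  rw [nilp_eq_range]
  ext M
  constructor
  · rintro ⟨_, ⟨p, rfl⟩, _, ⟨q, rfl⟩, rfl⟩
    exact ⟨_, ⟨(q.2, p.2), rfl⟩, (lie_nilpParam p q).symm⟩
  · rintro ⟨_, ⟨⟨w, v⟩, rfl⟩, rfl⟩
    exact ⟨_, ⟨(0, v), rfl⟩, _, ⟨(0, w), rfl⟩, (lie_nilpParam (0, v) (0, w)).symm⟩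

theorem span_lie_nilp :
    Submodule.span ℝ {m | ∃ M₁ ∈ nilp, ∃ M₂ ∈ nilp, m = ⁅M₁, M₂⁆} =
      Submodule.span ℝ derivedNilp := by
  rw [setOf_lie_nilp, Submodule.span_image, span_range_wedge, Submodule.map_top,
    derivedNilp_eq_range, Submodule.span_eq]

theorem finrank_span_nilp : finrank ℝ (Submodule.span ℝ nilp) = 6 := by
  rw [nilp_eq_range, Submodule.span_eq, LinearMap.finrank_range_of_inj nilpParam_injective,
    Module.finrank_prod, finrank_so, Module.finrank_fin_fun, Fintype.card_fin]
  rfl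

theorem finrank_span_derivedNilp : finrank ℝ (Submodule.span ℝ derivedNilp) = 3 := by
  have comp_inl_injective : Function.Injective (nilpParam ∘ₗ LinearMap.inl ℝ _ _) :=
    nilpParam_injective.comp LinearMap.inl_injective
  rw [derivedNilp_eq_range, Submodule.span_eq, LinearMap.finrank_range_of_inj comp_inl_injective,
    finrank_so, Fintype.card_fin]
  rfl

/-- 𝔫 is closed under the commutator bracket, its derived
subalgebra is { S(B) : Bᵀ = −B } and is 3-dimensional, brackets of derived
elements with 𝔫 vanish (two-step nilpotency), and 𝔫 is 6-dimensional. -/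
theorem nilp_two_step_nilpotent :
    (∀ M₁ ∈ nilp, ∀ M₂ ∈ nilp, ⁅M₁, M₂⁆ ∈ nilp) ∧
    Submodule.span ℝ {m | ∃ M₁ ∈ nilp, ∃ M₂ ∈ nilp, m = ⁅M₁, M₂⁆} =
      Submodule.span ℝ derivedNilp ∧
    (∀ M₁ ∈ derivedNilp, ∀ M₂ ∈ nilp, ⁅M₁, M₂⁆ = 0) ∧
    Module.finrank ℝ (Submodule.span ℝ nilp) = 6 ∧
    Module.finrank ℝ (Submodule.span ℝ derivedNilp) = 3 :=
  ⟨fun _ h₁ _ h₂ ↦ lie_mem_nilp h₁ h₂, span_lie_nilp,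
    fun _ h₁ _ h₂ ↦ lie_eq_zero_of_mem_derivedNilp h₁ h₂, finrank_span_nilp,
    finrank_span_derivedNilp⟩
end
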